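/- arXiv:2511.07631 — 5 statements merged into one kernel-verified Lean document; each statement's English description precedes it below -/
import Mathlib

section
/- If X is an edge-transitive simplicial surface, then for every face F of X the Aut(X)-orbit of F has size |X_2| or size |X_2|/2, i.e. either |F^{Aut(X)}| = |X_2| or 2·|F^{Aut(X)}| = |X_2|. -/
open Finset

/-- A (connected) simplicial surface: a finite, downward-closed family of nonempty subsets of
the vertex set `α`, pure of dimension 2, such that every edge lies in exactly two faces,
the faces around each vertex form an umbrella, and the surface is connected. -/
structure SimplicialSurface (α : Type*) [Fintype α] [DecidableEq α] where
  cplx : Finset (Finset α)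
  nonempty_of_mem : ∀ s ∈ cplx, s.Nonempty
  down_closed : ∀ s ∈ cplx, ∀ t : Finset α, t.Nonempty → t ⊆ s → t ∈ cplx
  card_le_three : ∀ s ∈ cplx, s.card ≤ 3
  pure_two : ∀ s ∈ cplx, ∃ F ∈ cplx, s ⊆ F ∧ F.card = 3
  dim_two : ∃ F ∈ cplx, F.card = 3
  all_vertices : ∀ x : α, {x} ∈ cplx
  edge_in_two_faces : ∀ e ∈ cplx, e.card = 2 →
    (cplx.filter (fun F => e ⊆ F ∧ F.card = 3)).card = 2
  umbrella_exists : ∀ v : α, ∃ n : ℕ, 0 < n ∧ ∃ u : Fin n → Finset α,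
    Function.Injective u ∧
    (∀ i, u i ∈ cplx ∧ (u i).card = 3 ∧ v ∈ u i) ∧
    (∀ F ∈ cplx, F.card = 3 → v ∈ F → ∃ i, u i = F) ∧
    (∀ i : Fin n, (u i ∩ u (finRotate n i)).card = 2)
  connected : ∀ F ∈ cplx, ∀ G ∈ cplx, F.card = 3 → G.card = 3 →
    Relation.ReflTransGen (fun A B => A ∈ cplx ∧ B ∈ cplx ∧ (A ∩ B).card = 2) F G

lemma Equiv.Perm.finset_image_mul {α : Type*} [DecidableEq α] (π σ : Equiv.Perm α)
    (s : Finset α) :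
    Finset.image ⇑(π * σ) s = Finset.image ⇑π (Finset.image ⇑σ s) := by
  rw [Finset.image_image]
  rfl

namespace SimplicialSurface

variable {α : Type*} [Fintype α] [DecidableEq α] (X : SimplicialSurface α)

/-- The set `X_2` of faces of `X`, i.e. the 3-element members. -/
def faces : Finset (Finset α) := X.cplx.filter fun s => s.card = 3

/-- The set `X_1` of edges of `X`, i.e. the 2-element members. -/
def edges : Finset (Finset α) := X.cplx.filter fun s => s.card = 2

/-- The automorphism group of `X`: permutations of the vertices mapping members of the
complex to members of the complex. -/
def aut : Subgroup (Equiv.Perm α) where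
  carrier := { π | ∀ s : Finset α, s ∈ X.cplx ↔ Finset.image ⇑π s ∈ X.cplx }
  one_mem' := by intro s; simp
  mul_mem' := by
    intro π σ hπ hσ s
    rw [Equiv.Perm.finset_image_mul, ← hπ (Finset.image ⇑σ s), ← hσ s]
  inv_mem' := by
    intro π hπ s
    have h2 : Finset.image ⇑π (Finset.image ⇑π⁻¹ s) = s := by ext x; simp
    have h := hπ (Finset.image ⇑π⁻¹ s)
    rw [h2] at h
    exact h.symm

/-- The setwise stabiliser in `Aut(X)` of a set `s` of vertices. -/
def stab (s : Finset α) : Subgroup (Equiv.Perm α) where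
  carrier := { π | π ∈ X.aut ∧ Finset.image ⇑π s = s }
  one_mem' := ⟨X.aut.one_mem, by simp⟩
  mul_mem' := by
    rintro π σ ⟨hπ, hπs⟩ ⟨hσ, hσs⟩
    exact ⟨X.aut.mul_mem hπ hσ, by rw [Equiv.Perm.finset_image_mul, hσs, hπs]⟩
  inv_mem' := by
    rintro π ⟨hπ, hπs⟩
    refine ⟨X.aut.inv_mem hπ, ?_⟩
    calc Finset.image ⇑π⁻¹ s = Finset.image ⇑π⁻¹ (Finset.image ⇑π s) := by rw [hπs]
      _ = s := by ext x; simp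

/-- `X` is edge-transitive if `Aut(X)` acts transitively on the edges `X_1`. -/
def EdgeTransitive : Prop :=
  ∀ e₁ ∈ X.edges, ∀ e₂ ∈ X.edges, ∃ π ∈ X.aut, Finset.image ⇑π e₁ = e₂

/-- The orbit of a set of vertices under `Aut(X)`. -/
def orbit (s : Finset α) : Set (Finset α) := { t | ∃ π ∈ X.aut, Finset.image ⇑π s = t }

/-- The set of `Aut(X)`-orbits on the faces of `X`. -/
def faceOrbits : Set (Set (Finset α)) := { O | ∃ F ∈ X.faces, O = X.orbit F }

/-- The set of `Aut(X)`-orbits on the vertices of `X`. -/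
def vertexOrbits : Set (Set α) := { O | ∃ v : α, O = { w | ∃ π ∈ X.aut, π v = w } }

/-- The degree of a vertex: the number of faces containing it. -/
def degree (v : α) : ℕ := (X.faces.filter fun F => v ∈ F).card

end SimplicialSurface

/-- Every face of a set `A` of faces has three edges: counting incidences edge-by-edge gives
`3 * |A|`. -/
lemma SimplicialSurface.three_mul_card {α : Type*} [Fintype α] [DecidableEq α]
    (X : SimplicialSurface α) (A : Finset (Finset α)) (hA : A ⊆ X.faces) (k : ℕ)
    (hk : ∀ e ∈ X.edges, (A.filter fun G => e ⊆ G).card = k) :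
    3 * A.card = k * X.edges.card := by
  have h := Finset.sum_card_bipartiteAbove_eq_sum_card_bipartiteBelow
    (s := X.edges) (t := A) (fun e G => e ⊆ G)
  have h1 : ∑ e ∈ X.edges, (A.filter fun G => e ⊆ G).card = X.edges.card * k :=
    Finset.sum_const_nat hk
  have h2 : ∑ G ∈ A, (X.edges.filter fun e => e ⊆ G).card = A.card * 3 := by
    refine Finset.sum_const_nat fun G hG => ?_
    have hGf := hA hG
    simp only [SimplicialSurface.faces, Finset.mem_filter] at hGf
    have : (X.edges.filter fun e => e ⊆ G) = G.powersetCard 2 := by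
      ext e
      simp only [SimplicialSurface.edges, Finset.mem_filter, Finset.mem_powersetCard]
      constructor
      · rintro ⟨⟨_, h2⟩, h3⟩
        exact ⟨h3, h2⟩
      · rintro ⟨h3, h2⟩
        refine ⟨⟨X.down_closed G hGf.1 e ?_ h3, h2⟩, h3⟩
        rw [← Finset.card_pos]; omega
    rw [this, Finset.card_powersetCard, hGf.2]
    rfl
  simp only [Finset.bipartiteAbove, Finset.bipartiteBelow] at h
  rw [h1, h2] at h
  linarith

/-- If `X` is an edge-transitive simplicial surface, then for every face `F` the
`Aut(X)`-orbit of `F` has size `|X_2|` or size `|X_2|/2`. -/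
theorem orbit_ncard_of_edgeTransitive
    {α : Type*} [Fintype α] [DecidableEq α] (X : SimplicialSurface α)
    (hX : X.EdgeTransitive) (F : Finset α) (hF : F ∈ X.faces) :
    (X.orbit F).ncard = X.faces.card ∨ 2 * (X.orbit F).ncard = X.faces.card := by
  classical
  have horb : X.orbit F ⊆ (X.faces : Set (Finset α)) := by
    rintro G ⟨π, hπ, rfl⟩
    simp only [SimplicialSurface.faces, Finset.mem_filter, Finset.coe_filter,
      Set.mem_setOf_eq] at hF ⊢
    exact ⟨(hπ F).1 hF.1, by rw [Finset.card_image_of_injective _ π.injective]; exact hF.2⟩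
  obtain ⟨A, hAo⟩ : ∃ A : Finset (Finset α), (A : Set (Finset α)) = X.orbit F :=
    ⟨_, ((X.faces.finite_toSet).subset horb).coe_toFinset⟩
  have hmem : ∀ G, G ∈ A ↔ G ∈ X.orbit F := fun G => by rw [← hAo]; simp
  have hAf : A ⊆ X.faces := fun G hG => by
    have := horb ((hmem G).1 hG)
    simpa using this
  have hle : ∀ e₁ ∈ X.edges, ∀ e₂ ∈ X.edges,
      (A.filter fun G => e₁ ⊆ G).card ≤ (A.filter fun G => e₂ ⊆ G).card := by
    intro e₁ h₁ e₂ h₂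
    obtain ⟨π, hπ, rfl⟩ := hX e₁ h₁ e₂ h₂
    refine Finset.card_le_card_of_injOn (fun G => Finset.image ⇑π G) ?_
      (Finset.image_injective π.injective).injOn
    intro G hG
    have hG' : G ∈ A ∧ e₁ ⊆ G := by simpa using hG
    obtain ⟨σ, hσ, rfl⟩ := (hmem G).1 hG'.1
    have h3 : Finset.image ⇑π (Finset.image ⇑σ F) ∈ A :=
      (hmem _).2 ⟨π * σ, X.aut.mul_mem hπ hσ, Equiv.Perm.finset_image_mul π σ F⟩
    exact Finset.mem_coe.2 (Finset.mem_filter.2 ⟨h3, Finset.image_subset_image hG'.2⟩)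
  have htwo : ∀ e ∈ X.edges, (X.faces.filter fun G => e ⊆ G).card = 2 := by
    intro e he
    simp only [SimplicialSurface.edges, Finset.mem_filter] at he
    rw [← X.edge_in_two_faces e he.1 he.2, SimplicialSurface.faces, Finset.filter_filter]
    simp only [and_comm]
  have hF' := hF
  simp only [SimplicialSurface.faces, Finset.mem_filter] at hF'
  obtain ⟨e, heF, hec⟩ := Finset.exists_subset_card_eq (s := F) (n := 2) (by omega)
  have he : e ∈ X.edges := by
    simp only [SimplicialSurface.edges, Finset.mem_filter]
    refine ⟨X.down_closed F hF'.1 e ?_ heF, hec⟩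
    rw [← Finset.card_pos]; omega
  have hFA : F ∈ A := (hmem F).2 ⟨1, X.aut.one_mem, by simp⟩
  have hpos : 0 < (A.filter fun G => e ⊆ G).card :=
    Finset.card_pos.2 ⟨F, Finset.mem_filter.2 ⟨hFA, heF⟩⟩
  have hub : (A.filter fun G => e ⊆ G).card ≤ 2 := by
    rw [← htwo e he]
    exact Finset.card_le_card (Finset.filter_subset_filter _ hAf)
  have c1 := X.three_mul_card A hAf _ fun e' he' => le_antisymm (hle e' he' e he) (hle e he e' he')
  have c2 := X.three_mul_card X.faces (Finset.Subset.refl _) 2 htwo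
  rw [← hAo, Set.ncard_coe_finset]
  generalize (A.filter fun G => e ⊆ G).card = k at *
  interval_cases k <;> omega
end

section
/- If X is an edge-transitive simplicial surface, then Aut(X) acts transitively on the set X_0 of vertices of X. -/
open Finset

namespace SimplicialSurface

/-- An automorphism carrying the pair `{x, y}` to the pair `{a, b}`. -/
lemma exists_aut_of_edges {α : Type*} [Fintype α] [DecidableEq α] (X : SimplicialSurface α)
    (hX : X.EdgeTransitive) {x y a b : α} (hxy : x ≠ y) (hab : a ≠ b)
    (h1 : ({x, y} : Finset α) ∈ X.cplx) (h2 : ({a, b} : Finset α) ∈ X.cplx) :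
    ∃ π ∈ X.aut, (π x = a ∧ π y = b) ∨ (π x = b ∧ π y = a) := by
  obtain ⟨π, hπ, h⟩ := hX {x, y} (by simp [edges, h1, Finset.card_pair hxy])
    {a, b} (by simp [edges, h2, Finset.card_pair hab])
  refine ⟨π, hπ, ?_⟩
  have hne : π x ≠ π y := fun hh => hxy (π.injective hh)
  have hx : π x ∈ ({a, b} : Finset α) := by rw [← h]; simp
  have hy : π y ∈ ({a, b} : Finset α) := by rw [← h]; simp
  simp only [Finset.mem_insert, Finset.mem_singleton] at hx hy
  rcases hx with hx | hx <;> rcases hy with hy | hy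
  · exact absurd (hx.trans hy.symm) hne
  · exact Or.inl ⟨hx, hy⟩
  · exact Or.inr ⟨hx, hy⟩
  · exact absurd (hx.trans hy.symm) hne

/-- Some edge has both endpoints in the same orbit. -/
lemma exists_edge_same_orbit {α : Type*} [Fintype α] [DecidableEq α] (X : SimplicialSurface α)
    (hX : X.EdgeTransitive) :
    ∃ a b : α, a ≠ b ∧ ({a, b} : Finset α) ∈ X.cplx ∧ ∃ π ∈ X.aut, π a = b := by
  obtain ⟨F, hF, hc⟩ := X.dim_two
  obtain ⟨a, b, c, hab, hac, hbc, rfl⟩ := Finset.card_eq_three.mp hc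
  have e1 : ({a, b} : Finset α) ∈ X.cplx :=
    X.down_closed _ hF _ (by simp) (by intro z; simp; tauto)
  have e2 : ({a, c} : Finset α) ∈ X.cplx :=
    X.down_closed _ hF _ (by simp) (by intro z; simp; tauto)
  have e3 : ({b, c} : Finset α) ∈ X.cplx :=
    X.down_closed _ hF _ (by simp) (by intro z; simp; tauto)
  obtain ⟨π, hπ, h | h⟩ := X.exists_aut_of_edges hX hab hac e1 e2
  · exact ⟨b, c, hbc, e3, π, hπ, h.2⟩
  · exact ⟨a, c, hac, e2, π, hπ, h.1⟩

/-- Every vertex lies on an edge. -/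
lemma exists_edge_of_vertex {α : Type*} [Fintype α] [DecidableEq α] (X : SimplicialSurface α)
    (v : α) : ∃ y : α, v ≠ y ∧ ({v, y} : Finset α) ∈ X.cplx := by
  obtain ⟨F, hF, hs, hc⟩ := X.pure_two _ (X.all_vertices v)
  obtain ⟨y, hy, hne⟩ := Finset.exists_mem_ne (by omega : 1 < F.card) v
  refine ⟨y, hne.symm, X.down_closed F hF _ (by simp) ?_⟩
  rw [Finset.insert_subset_iff, Finset.singleton_subset_iff]
  exact ⟨hs (by simp), hy⟩

end SimplicialSurface

/-- If `X` is an edge-transitive simplicial surface, then `Aut(X)` acts transitively on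
the set `X_0` of vertices of `X`. -/
theorem vertex_transitive_of_edgeTransitive
    {α : Type*} [Fintype α] [DecidableEq α] (X : SimplicialSurface α)
    (hX : X.EdgeTransitive) (v w : α) :
    ∃ π ∈ X.aut, π v = w := by
  obtain ⟨a, b, hab, he, τ, hτ, hτab⟩ := X.exists_edge_same_orbit hX
  have key : ∀ x : α, ∃ π ∈ X.aut, π x = b := by
    intro x
    obtain ⟨y, hxy, hxe⟩ := X.exists_edge_of_vertex x
    obtain ⟨π, hπ, h | h⟩ := X.exists_aut_of_edges hX hxy hab hxe he
    · exact ⟨τ * π, X.aut.mul_mem hτ hπ, by rw [Equiv.Perm.mul_apply, h.1, hτab]⟩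
    · exact ⟨π, hπ, h.1⟩
  obtain ⟨π, hπ, h1⟩ := key v
  obtain ⟨σ, hσ, h2⟩ := key w
  refine ⟨σ⁻¹ * π, X.aut.mul_mem (X.aut.inv_mem hσ) hπ, ?_⟩
  rw [Equiv.Perm.mul_apply, h1, ← h2]
  simp
end

section
/- Let X be an edge-transitive simplicial surface and e an edge of X. Then the stabiliser of e in Aut(X) embeds into the group C_2 × C_2, i.e. there exists an injective group homomorphism from Stab_{Aut(X)}(e) into (Z/2Z) × (Z/2Z). -/
open Finset

theorem exists_hom_of_parity {H : Type*} [Group H] (p : H → Prop)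
    (hp1 : p 1) (hp : ∀ g h, p (g * h) ↔ (p g ↔ p h)) :
    ∃ f : H →* Multiplicative (ZMod 2), ∀ g, f g = 1 → p g := by
  classical
  refine ⟨{ toFun := fun g => Multiplicative.ofAdd (if p g then 0 else 1)
            map_one' := by simp [hp1]
            map_mul' := ?_ }, ?_⟩
  · intro g h
    rw [← ofAdd_add]
    congr 1
    by_cases hg : p g <;> by_cases hh : p h <;> simp [hp, hg, hh]
    decide
  · intro g hg
    by_contra hn
    simp [hn] at hg

theorem exists_hom_of_pair {H β : Type*} [Group H] [MulAction H β] (x y : β) (hxy : x ≠ y)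
    (hx : ∀ g : H, g • x = x ∨ g • x = y) (hy : ∀ g : H, g • y = x ∨ g • y = y) :
    ∃ f : H →* Multiplicative (ZMod 2), ∀ g, f g = 1 → g • x = x := by
  apply exists_hom_of_parity (fun g : H => g • x = x) (one_smul _ _)
  intro g h
  have inj : g • x ≠ g • y := fun h' => hxy (MulAction.injective g h')
  simp only [mul_smul]
  rcases hx h with h1 | h1 <;> rw [h1]
  · simp
  · rcases hx g with h2 | h2 <;> rcases hy g with h3 | h3 <;> simp_all

theorem fix_third {α : Type*} [DecidableEq α] (φ : Equiv.Perm α) (F d : Finset α)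
    (hF : F.card = 3) (hd : d.card = 2) (hdF : d ⊆ F) (hfix : ∀ x ∈ d, φ x = x)
    (hφ : Finset.image ⇑φ F = F) : ∀ x ∈ F, φ x = x := by
  intro x hx
  by_cases hxd : x ∈ d
  · exact hfix x hxd
  have hins : insert x d = F := by
    apply Finset.eq_of_subset_of_card_le
    · exact Finset.insert_subset hx hdF
    · rw [Finset.card_insert_of_notMem hxd]; omega
  have h1 : φ x ∈ F := by rw [← hφ]; exact Finset.mem_image_of_mem _ hx
  rw [← hins, Finset.mem_insert] at h1
  rcases h1 with h1 | h1
  · exact h1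
  · have := φ.injective (hfix _ h1)
    rw [this] at h1
    exact absurd h1 hxd

theorem two_faces {α : Type*} [Fintype α] [DecidableEq α] (X : SimplicialSurface α)
    (d : Finset α) (hd : d ∈ X.cplx) (hd2 : d.card = 2) :
    ∃ F G, F ≠ G ∧ ∀ A, (A ∈ X.cplx ∧ d ⊆ A ∧ A.card = 3) ↔ (A = F ∨ A = G) := by
  obtain ⟨F, G, hne, h⟩ := Finset.card_eq_two.1 (X.edge_in_two_faces d hd hd2)
  refine ⟨F, G, hne, fun A => ?_⟩
  have := Finset.ext_iff.1 h A
  simpa using this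

theorem fix_adjacent {α : Type*} [Fintype α] [DecidableEq α] (X : SimplicialSurface α)
    (φ : Equiv.Perm α) (hφ : φ ∈ X.aut) (F G d : Finset α)
    (hF : F ∈ X.cplx) (hF3 : F.card = 3) (hG : G ∈ X.cplx) (hG3 : G.card = 3)
    (hd2 : d.card = 2) (hdF : d ⊆ F) (hdG : d ⊆ G) (hfix : ∀ x ∈ G, φ x = x) :
    ∀ x ∈ F, φ x = x := by
  have hd : d ∈ X.cplx := X.down_closed F hF d (Finset.card_pos.1 (by omega)) hdF
  have hdfix : ∀ x ∈ d, φ x = x := fun x hx => hfix x (hdG hx)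
  by_cases hFG : F = G
  · subst hFG; exact hfix
  apply fix_third φ F d hF3 hd2 hdF hdfix
  obtain ⟨A, B, hAB, h⟩ := two_faces X d hd hd2
  have hGG : Finset.image ⇑φ G = G := by
    have : Finset.image ⇑φ G = Finset.image id G := Finset.image_congr hfix
    simpa using this
  have h3 : Finset.image ⇑φ F ≠ G := fun h' =>
    hFG (Finset.image_injective φ.injective (h'.trans hGG.symm))
  have h1 := (h F).1 ⟨hF, hdF, hF3⟩
  have h2 := (h G).1 ⟨hG, hdG, hG3⟩
  have h4 := (h (Finset.image ⇑φ F)).1 ⟨(hφ F).1 hF, fun x hx =>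
    Finset.mem_image.2 ⟨x, hdF hx, hdfix x hx⟩, by
      rw [Finset.card_image_of_injective _ φ.injective, hF3]⟩
  grind

theorem fix_all {α : Type*} [Fintype α] [DecidableEq α] (X : SimplicialSurface α)
    (φ : Equiv.Perm α) (hφ : φ ∈ X.aut) (F : Finset α)
    (hF : F ∈ X.cplx) (hF3 : F.card = 3) (hfix : ∀ x ∈ F, φ x = x) : φ = 1 := by
  have key : ∀ B, Relation.ReflTransGen
      (fun A B => A ∈ X.cplx ∧ B ∈ X.cplx ∧ (A ∩ B).card = 2) F B →
      ∀ K ∈ X.cplx, K.card = 3 → B ⊆ K → ∀ x ∈ K, φ x = x := by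
    intro B hB
    induction hB with
    | refl =>
      intro K hK hK3 hs
      rw [← Finset.eq_of_subset_of_card_le hs (by omega)]
      exact hfix
    | @tail A B _ hAB ih =>
      intro K hK hK3 hs
      obtain ⟨hA, hB, h2⟩ := hAB
      obtain ⟨G, hG, hAG, hG3⟩ := X.pure_two A hA
      exact fix_adjacent X φ hφ K G (A ∩ B) hK hK3 hG hG3 h2
        (Finset.inter_subset_right.trans hs) (Finset.inter_subset_left.trans hAG)
        (ih G hG hG3 hAG)
  ext x
  obtain ⟨K, hK, hxK, hK3⟩ := X.pure_two {x} (X.all_vertices x)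
  exact key K (X.connected F hF K hK hF3 hK3) K hK hK3 (Finset.Subset.refl _) x (by simpa using hxK)

open scoped Pointwise in
/-- If `X` is an edge-transitive simplicial surface and `e` an edge of `X`, then the
stabiliser of `e` in `Aut(X)` embeds into `C₂ × C₂`. -/
theorem stab_embeds_into_C2_times_C2
    {α : Type*} [Fintype α] [DecidableEq α] (X : SimplicialSurface α)
    (hX : X.EdgeTransitive) (e : Finset α) (he : e ∈ X.edges) :
    ∃ f : (X.stab e) →* Multiplicative (ZMod 2) × Multiplicative (ZMod 2),
      Function.Injective f := by
  obtain ⟨hec, he2⟩ := Finset.mem_filter.1 he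
  obtain ⟨a, b, hab, rfl⟩ := Finset.card_eq_two.1 he2
  obtain ⟨F, G, hFG, h⟩ := two_faces X _ hec he2
  have hpt : ∀ (g : X.stab {a, b}) x, x ∈ ({a, b} : Finset α) → g • x = a ∨ g • x = b := by
    intro g x hx
    have h1 : g.1 x ∈ Finset.image ⇑g.1 {a, b} := Finset.mem_image_of_mem _ hx
    rw [g.2.2, Finset.mem_insert, Finset.mem_singleton] at h1
    exact h1
  have hface : ∀ (g : X.stab {a, b}) A, (A = F ∨ A = G) → g • A = F ∨ g • A = G := by
    intro g A hA
    obtain ⟨h1, h2, h3⟩ := (h A).2 hA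
    apply (h (g • A)).1
    refine ⟨(g.2.1 A).1 h1, ?_, ?_⟩
    · have := Finset.image_subset_image (f := ⇑g.1) h2
      rw [g.2.2] at this
      exact this
    · rw [← h3]; exact Finset.card_image_of_injective _ g.1.injective
  obtain ⟨f1, hf1⟩ := exists_hom_of_pair (H := X.stab {a, b}) a b hab
    (fun g => hpt g a (by simp)) (fun g => hpt g b (by simp))
  obtain ⟨f2, hf2⟩ := exists_hom_of_pair (H := X.stab {a, b}) F G hFG
    (fun g => hface g F (Or.inl rfl)) (fun g => hface g G (Or.inr rfl))
  refine ⟨f1.prod f2, (injective_iff_map_eq_one _).2 fun g hg => ?_⟩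
  rw [MonoidHom.prod_apply, Prod.mk_eq_one] at hg
  have ha : g.1 a = a := hf1 g hg.1
  have hF : Finset.image ⇑g.1 F = F := hf2 g hg.2
  have hb : g.1 b = b := by
    rcases hpt g b (by simp) with h1 | h1
    · exact absurd (g.1.injective (ha.trans (Eq.symm h1))) hab
    · exact h1
  obtain ⟨h1, h2, h3⟩ := (h F).2 (Or.inl rfl)
  apply Subtype.ext
  apply fix_all X g.1 g.2.1 F h1 h3
  apply fix_third g.1 F {a, b} h3 he2 h2 _ hF
  intro x hx
  rcases Finset.mem_insert.1 hx with rfl | hx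
  · exact ha
  · rw [Finset.mem_singleton.1 hx]; exact hb
end

section
/- Let X be an edge-transitive simplicial surface, let f denote the number of orbits of Aut(X) on the faces X_2, and let s denote the order of the stabiliser in Aut(X) of an edge of X (this order is independent of the chosen edge). Then the pair (f, s) is one of (1,2), (1,4), (2,1), (2,2). -/
open Finset

namespace SimplicialSurface

section Helpers

variable {α : Type*} [Fintype α] [DecidableEq α] (X : SimplicialSurface α)

lemma exists_two (e : Finset α) (he : e ∈ X.edges) :
    ∃ F₁ F₂ : Finset α, F₁ ≠ F₂ ∧ F₁ ∈ X.faces ∧ F₂ ∈ X.faces ∧ e ⊆ F₁ ∧ e ⊆ F₂ ∧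
      ∀ C ∈ X.faces, e ⊆ C → C = F₁ ∨ C = F₂ := by
  simp only [edges, Finset.mem_filter] at he
  have h := X.edge_in_two_faces e he.1 he.2
  obtain ⟨F₁, F₂, hne, hs⟩ := Finset.card_eq_two.1 h
  have h1 : F₁ ∈ ({F₁, F₂} : Finset (Finset α)) := by simp
  have h2 : F₂ ∈ ({F₁, F₂} : Finset (Finset α)) := by simp
  rw [← hs, Finset.mem_filter] at h1 h2
  refine ⟨F₁, F₂, hne, by simp [faces, h1], by simp [faces, h2], h1.2.1, h2.2.1, ?_⟩
  intro C hC heC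
  simp only [faces, Finset.mem_filter] at hC
  have h3 : C ∈ ({F₁, F₂} : Finset (Finset α)) := by
    rw [← hs, Finset.mem_filter]
    exact ⟨hC.1, heC, hC.2⟩
  simpa using h3

lemma image_face {π : Equiv.Perm α} (hπ : π ∈ X.aut) {F : Finset α} (hF : F ∈ X.faces) :
    Finset.image ⇑π F ∈ X.faces := by
  simp only [faces, Finset.mem_filter] at hF ⊢
  exact ⟨(hπ F).1 hF.1, by rw [Finset.card_image_of_injective _ π.injective, hF.2]⟩

lemma image_inv_eq (π : Equiv.Perm α) {s t : Finset α} (h : Finset.image ⇑π s = t) :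
    Finset.image ⇑π⁻¹ t = s := by
  subst h
  ext x; simp

lemma fix_of_image {σ : Equiv.Perm α} {e B : Finset α} (hB : B.card = 3) (he : e.card = 2)
    (heB : e ⊆ B) (hfix : ∀ x ∈ e, σ x = x) (him : Finset.image ⇑σ B = B) :
    ∀ x ∈ B, σ x = x := by
  have hc : (B \ e).card = 1 := by rw [Finset.card_sdiff_of_subset heB]; omega
  obtain ⟨z, hz⟩ := Finset.card_eq_one.1 hc
  intro x hx
  by_cases hxe : x ∈ e
  · exact hfix x hxe
  have hx1 : x ∈ B \ e := by simp [hx, hxe]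
  have hx2 : σ x ∈ B \ e := by
    rw [Finset.mem_sdiff]
    refine ⟨by rw [← him]; exact Finset.mem_image_of_mem _ hx, fun h => ?_⟩
    have := σ.injective (hfix _ h)
    exact hxe (this ▸ h)
  rw [hz, Finset.mem_singleton] at hx1 hx2
  rw [hx1, ← hx1, hx2, hx1]

lemma rigid {σ : Equiv.Perm α} (hσ : σ ∈ X.aut) {F : Finset α} (hF : F ∈ X.faces)
    (hfix : ∀ x ∈ F, σ x = x) : σ = 1 := by
  have key : ∀ G, Relation.ReflTransGen
      (fun A B => A ∈ X.cplx ∧ B ∈ X.cplx ∧ (A ∩ B).card = 2) F G →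
      ∃ H ∈ X.faces, G ⊆ H ∧ ∀ x ∈ H, σ x = x := by
    intro G hG
    induction hG with
    | refl => exact ⟨F, hF, subset_rfl, hfix⟩
    | @tail A B _ hAB ih =>
      obtain ⟨H, hH, hAH, hfH⟩ := ih
      obtain ⟨hA, hB, hc⟩ := hAB
      have hle := X.card_le_three B hB
      have hge : 2 ≤ B.card := hc ▸ Finset.card_le_card Finset.inter_subset_right
      by_cases hB2 : B.card = 2
      · have : A ∩ B = B := Finset.eq_of_subset_of_card_le Finset.inter_subset_right (by omega)
        exact ⟨H, hH, (Finset.inter_eq_right.1 this).trans hAH, hfH⟩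
      have hB3 : B.card = 3 := by omega
      have hBf : B ∈ X.faces := by simp [faces, hB, hB3]
      have heH : A ∩ B ⊆ H := Finset.inter_subset_left.trans hAH
      have heB : A ∩ B ⊆ B := Finset.inter_subset_right
      have hfe : ∀ x ∈ A ∩ B, σ x = x := fun x hx => hfH x (heH hx)
      refine ⟨B, hBf, subset_rfl, ?_⟩
      by_cases hHB : H = B
      · exact hHB ▸ hfH
      refine fix_of_image hB3 hc heB hfe ?_
      have hedge : A ∩ B ∈ X.edges := by
        simp only [edges, Finset.mem_filter]
        exact ⟨X.down_closed B hB _ (Finset.card_pos.1 (by omega)) heB, hc⟩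
      obtain ⟨F₁, F₂, hne, -, -, -, -, hall⟩ := X.exists_two _ hedge
      have hσB : A ∩ B ⊆ Finset.image ⇑σ B := fun x hx =>
        Finset.mem_image.2 ⟨x, heB hx, hfe x hx⟩
      have hσH : Finset.image ⇑σ H = H := by
        rw [Finset.image_congr (g := id) (fun x hx => hfH x hx), Finset.image_id]
      have hne2 : Finset.image ⇑σ B ≠ H := fun h =>
        hHB ((Finset.image_injective σ.injective (h.trans hσH.symm)).symm)
      have c1 := hall _ hBf heB
      have c2 := hall _ hH heH
      have c3 := hall _ (X.image_face hσ hBf) hσB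
      grind
  ext x
  obtain ⟨G, hG, hxG, hG3⟩ := X.pure_two _ (X.all_vertices x)
  have hF' := hF
  simp only [faces, Finset.mem_filter] at hF'
  obtain ⟨H, -, hGH, hf⟩ := key G (X.connected F hF'.1 G hG hF'.2 hG3)
  exact hf x (hGH (hxG (by simp)))

/-- Elements of an edge stabiliser agreeing on one end point and on one face agree. -/
lemma stab_inj {a b : α} {F : Finset α} (hab : a ≠ b) (hF : F ∈ X.faces) (heF : {a, b} ⊆ F)
    {g h : Equiv.Perm α} (hg : g ∈ X.stab {a, b}) (hh : h ∈ X.stab {a, b})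
    (h1 : g a = h a) (h2 : Finset.image ⇑g F = Finset.image ⇑h F) : g = h := by
  have hmem : h⁻¹ * g ∈ X.aut := X.aut.mul_mem (X.aut.inv_mem hh.1) hg.1
  have hmap : ∀ k ∈ X.stab ({a, b} : Finset α), ∀ x ∈ ({a, b} : Finset α), k x = a ∨ k x = b := by
    intro k hk x hx
    have := Finset.mem_image_of_mem (⇑k) hx
    rw [hk.2] at this
    simpa using this
  have hb : g b = h b := by
    have e1 := hmap g hg a (by simp)
    have e2 := hmap g hg b (by simp)
    have e3 := hmap h hh b (by simp)
    have n1 : g a ≠ g b := fun h => hab (g.injective h)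
    have n2 : h a ≠ h b := fun h' => hab (h.injective h')
    grind
  have hF3 : F.card = 3 := (Finset.mem_filter.1 hF).2
  have : h⁻¹ * g = 1 := by
    refine X.rigid hmem hF (fix_of_image hF3 (Finset.card_pair hab) heF ?_ ?_)
    · intro x hx
      simp only [Finset.mem_insert, Finset.mem_singleton] at hx
      rcases hx with rfl | rfl
      · simp [h1]
      · simp [hb]
    · rw [Equiv.Perm.finset_image_mul, h2]
      exact image_inv_eq h rfl
  exact (inv_mul_eq_one.1 this).symm

/-- Elements of an edge stabiliser act on its two faces. -/
lemma stab_face {e F₁ F₂ : Finset α} (hF₁ : F₁ ∈ X.faces) (heF : e ⊆ F₁)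
    (hall : ∀ C ∈ X.faces, e ⊆ C → C = F₁ ∨ C = F₂) {g : Equiv.Perm α} (hg : g ∈ X.stab e) :
    Finset.image ⇑g F₁ = F₁ ∨ Finset.image ⇑g F₁ = F₂ := by
  refine hall _ (X.image_face hg.1 hF₁) ?_
  have := Finset.image_subset_image (f := ⇑g) heF
  rwa [hg.2] at this

lemma orbit_eq {F : Finset α} {π : Equiv.Perm α} (hπ : π ∈ X.aut) :
    X.orbit (Finset.image ⇑π F) = X.orbit F := by
  ext t
  constructor
  · rintro ⟨g, hg, rfl⟩
    exact ⟨g * π, X.aut.mul_mem hg hπ, Equiv.Perm.finset_image_mul _ _ _⟩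
  · rintro ⟨g, hg, rfl⟩
    refine ⟨g * π⁻¹, X.aut.mul_mem hg (X.aut.inv_mem hπ), ?_⟩
    rw [Equiv.Perm.finset_image_mul, image_inv_eq π rfl]

lemma not_one_one (hX : X.EdgeTransitive) {e F₁ F₂ : Finset α} (he : e ∈ X.edges)
    (hne : F₁ ≠ F₂) (hF₁ : F₁ ∈ X.faces) (heF : e ⊆ F₁) (heF' : e ⊆ F₂)
    (hall : ∀ C ∈ X.faces, e ⊆ C → C = F₁ ∨ C = F₂)
    {π : Equiv.Perm α} (hπ : π ∈ X.aut) (hπF : Finset.image ⇑π F₁ = F₂)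
    (htriv : ∀ g ∈ X.stab e, g = 1) : False := by
  classical
  let A : Finset (Equiv.Perm α) :=
    Finset.univ.filter fun g => g ∈ X.aut ∧ Finset.image ⇑g F₁ = F₁
  let B : Finset (Equiv.Perm α) :=
    Finset.univ.filter fun g => g ∈ X.aut ∧ Finset.image ⇑g F₂ = F₁
  have hAB : A.card = B.card := by
    refine Finset.card_bij' (fun g _ => g * π⁻¹) (fun g _ => g * π) ?_ ?_ ?_ ?_
    · intro g hg
      simp only [A, B, Finset.mem_filter, Finset.mem_univ, true_and] at hg ⊢
      refine ⟨X.aut.mul_mem hg.1 (X.aut.inv_mem hπ), ?_⟩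
      rw [Equiv.Perm.finset_image_mul, image_inv_eq π hπF, hg.2]
    · intro g hg
      simp only [A, B, Finset.mem_filter, Finset.mem_univ, true_and] at hg ⊢
      refine ⟨X.aut.mul_mem hg.1 hπ, ?_⟩
      rw [Equiv.Perm.finset_image_mul, hπF, hg.2]
    · intro g _; simp
    · intro g _; simp
  have hdisj : Disjoint A B := by
    rw [Finset.disjoint_left]
    intro g hgA hgB
    simp only [A, B, Finset.mem_filter, Finset.mem_univ, true_and] at hgA hgB
    exact hne (Finset.image_injective g.injective (hgA.2.trans hgB.2.symm))
  have he' := he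
  simp only [edges, Finset.mem_filter] at he'
  have hF' := hF₁
  simp only [faces, Finset.mem_filter] at hF'
  have hcard : (A ∪ B).card = (Finset.powersetCard 2 F₁).card := by
    refine Finset.card_bij (fun g _ => Finset.image ⇑g e) ?_ ?_ ?_
    · intro g hg
      rw [Finset.mem_powersetCard]
      refine ⟨?_, by rw [Finset.card_image_of_injective _ g.injective, he'.2]⟩
      simp only [A, B, Finset.mem_union, Finset.mem_filter, Finset.mem_univ, true_and] at hg
      rcases hg with hg | hg
      · have := Finset.image_subset_image (f := ⇑g) heF
        rwa [hg.2] at this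
      · have := Finset.image_subset_image (f := ⇑g) heF'
        rwa [hg.2] at this
    · intro g hg h hh hgh
      have hg' : g ∈ X.aut := by
        simp only [A, B, Finset.mem_union, Finset.mem_filter, Finset.mem_univ, true_and] at hg
        exact hg.elim And.left And.left
      have hh' : h ∈ X.aut := by
        simp only [A, B, Finset.mem_union, Finset.mem_filter, Finset.mem_univ, true_and] at hh
        exact hh.elim And.left And.left
      have : h⁻¹ * g ∈ X.stab e := by
        refine ⟨X.aut.mul_mem (X.aut.inv_mem hh') hg', ?_⟩
        rw [Equiv.Perm.finset_image_mul]
        exact image_inv_eq h hgh.symm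
      exact (inv_mul_eq_one.1 (htriv _ this)).symm
    · intro e₂ he₂
      rw [Finset.mem_powersetCard] at he₂
      have he₂' : e₂ ∈ X.edges := by
        simp only [edges, Finset.mem_filter]
        exact ⟨X.down_closed _ hF'.1 _ (Finset.card_pos.1 (by omega)) he₂.1, he₂.2⟩
      obtain ⟨g, hg, hge⟩ := hX e he e₂ he₂'
      refine ⟨g, ?_, hge⟩
      have hsub : e ⊆ Finset.image ⇑g⁻¹ F₁ := by
        have := Finset.image_subset_image (f := ⇑g⁻¹) he₂.1
        rwa [image_inv_eq g hge] at this
      have hc := hall _ (X.image_face (X.aut.inv_mem hg) hF₁) hsub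
      simp only [A, B, Finset.mem_union, Finset.mem_filter, Finset.mem_univ, true_and]
      rcases hc with hc | hc
      · left
        have := image_inv_eq g⁻¹ hc
        rw [inv_inv] at this
        exact ⟨hg, this⟩
      · right
        have := image_inv_eq g⁻¹ hc
        rw [inv_inv] at this
        exact ⟨hg, this⟩
  rw [Finset.card_union_of_disjoint hdisj, Finset.card_powersetCard, hF'.2] at hcard
  have : Nat.choose 3 2 = 3 := rfl
  omega

lemma faceOrbits_eq (hX : X.EdgeTransitive) {e F₁ F₂ : Finset α} (he : e ∈ X.edges)
    (hF₁ : F₁ ∈ X.faces) (hF₂ : F₂ ∈ X.faces)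
    (hall : ∀ C ∈ X.faces, e ⊆ C → C = F₁ ∨ C = F₂) :
    X.faceOrbits = {X.orbit F₁, X.orbit F₂} := by
  ext O
  simp only [faceOrbits, Set.mem_setOf_eq, Set.mem_insert_iff, Set.mem_singleton_iff]
  constructor
  · rintro ⟨F, hF, rfl⟩
    have hF' := hF
    simp only [faces, Finset.mem_filter] at hF'
    obtain ⟨e₂, hsub, hc⟩ := Finset.exists_subset_card_eq (s := F) (n := 2) (by omega)
    have he₂ : e₂ ∈ X.edges := by
      simp only [edges, Finset.mem_filter]
      exact ⟨X.down_closed _ hF'.1 _ (Finset.card_pos.1 (by omega)) hsub, hc⟩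
    obtain ⟨g, hg, hge⟩ := hX e₂ he₂ e he
    have hs : e ⊆ Finset.image ⇑g F := by
      rw [← hge]; exact Finset.image_subset_image hsub
    rw [← X.orbit_eq (F := F) hg]
    rcases hall _ (X.image_face hg hF) hs with h | h <;> simp [h]
  · rintro (rfl | rfl)
    exacts [⟨F₁, hF₁, rfl⟩, ⟨F₂, hF₂, rfl⟩]

end Helpers

end SimplicialSurface

/-- If `X` is an edge-transitive simplicial surface, `f` the number of `Aut(X)`-orbits on
the faces, and `s` the order of the stabiliser in `Aut(X)` of any edge, then
`(f, s) ∈ {(1,2), (1,4), (2,1), (2,2)}`. -/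
theorem face_edge_type_mem
    {α : Type*} [Fintype α] [DecidableEq α] (X : SimplicialSurface α)
    (hX : X.EdgeTransitive) (e : Finset α) (he : e ∈ X.edges) :
    (X.faceOrbits.ncard, Nat.card (X.stab e)) ∈
      ({(1, 2), (1, 4), (2, 1), (2, 2)} : Set (ℕ × ℕ)) := by
  classical
  obtain ⟨F₁, F₂, hne, hF₁, hF₂, heF₁, heF₂, hall⟩ := X.exists_two e he
  have hc2 : e.card = 2 := (Finset.mem_filter.1 he).2
  have horb := X.faceOrbits_eq hX he hF₁ hF₂ hall
  obtain ⟨a, b, hab, rfl⟩ := Finset.card_eq_two.1 hc2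
  have hmap : ∀ k ∈ X.stab ({a, b} : Finset α), ∀ x ∈ ({a, b} : Finset α), k x = a ∨ k x = b := by
    intro k hk x hx
    have := Finset.mem_image_of_mem (⇑k) hx
    rw [hk.2] at this
    simpa using this
  let φ : X.stab ({a, b} : Finset α) → Bool × Bool := fun g =>
    (decide (g.1 a = a), decide (Finset.image ⇑g.1 F₁ = F₁))
  have hφ : Function.Injective φ := by
    rintro ⟨g, hg⟩ ⟨h, hh⟩ hgh
    simp only [φ, Prod.mk.injEq, decide_eq_decide] at hgh
    have e1 := hmap g hg a (by simp)
    have e2 := hmap h hh a (by simp)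
    have f1 := X.stab_face hF₁ heF₁ hall hg
    have f2 := X.stab_face hF₁ heF₁ hall hh
    obtain ⟨q1, q2⟩ := hgh
    refine Subtype.ext (X.stab_inj hab hF₁ heF₁ hg hh ?_ ?_)
    · grind
    · grind
  have hle : Nat.card (X.stab ({a, b} : Finset α)) ≤ 4 := by
    have := Nat.card_le_card_of_injective φ hφ
    simpa using this
  have hpos : 0 < Nat.card (X.stab ({a, b} : Finset α)) := Nat.card_pos
  have hn3 : Nat.card (X.stab ({a, b} : Finset α)) ≠ 3 := by
    intro h3
    haveI : Fact (Nat.Prime 3) := ⟨Nat.prime_three⟩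
    obtain ⟨⟨g, hg⟩, hord⟩ := exists_prime_orderOf_dvd_card' (G := X.stab ({a, b} : Finset α)) 3
      (by rw [h3])
    have hsq : g * g = 1 := by
      refine X.stab_inj hab hF₁ heF₁ ((X.stab _).mul_mem hg hg) (X.stab _).one_mem ?_ ?_
      · have e1 := hmap g hg a (by simp)
        have e2 := hmap g hg b (by simp)
        have n1 : g a ≠ g b := fun h => hab (g.injective h)
        simp only [Equiv.Perm.mul_apply, Equiv.Perm.one_apply]
        grind
      · rw [Equiv.Perm.finset_image_mul]
        have f1 := X.stab_face hF₁ heF₁ hall hg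
        have f2 := X.stab_face hF₂ heF₂ (fun C h h' => (hall C h h').symm) hg
        have n1 : Finset.image ⇑g F₁ ≠ Finset.image ⇑g F₂ :=
          fun h => hne (Finset.image_injective g.injective h)
        have h1 : Finset.image ⇑(1 : Equiv.Perm α) F₁ = F₁ := by simp
        rw [h1]
        grind
    have hd : orderOf (⟨g, hg⟩ : X.stab ({a, b} : Finset α)) ∣ 2 :=
      orderOf_dvd_of_pow_eq_one (by rw [pow_two]; exact Subtype.ext hsq)
    rw [hord] at hd
    omega
  by_cases hO : X.orbit F₁ = X.orbit F₂
  · have hf : X.faceOrbits.ncard = 1 := by rw [horb, hO]; simp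
    have hn1 : Nat.card (X.stab ({a, b} : Finset α)) ≠ 1 := by
      intro h1
      have hF₂O : F₂ ∈ X.orbit F₁ := by
        rw [hO]; exact ⟨1, X.aut.one_mem, by simp⟩
      obtain ⟨π, hπ, hπF⟩ := hF₂O
      refine X.not_one_one hX he hne hF₁ heF₁ heF₂ hall hπ hπF ?_
      intro g hg
      haveI := (Nat.card_eq_one_iff_unique.1 h1).1
      exact congrArg Subtype.val
        (Subsingleton.elim (⟨g, hg⟩ : X.stab ({a, b} : Finset α)) 1)
    have : Nat.card (X.stab ({a, b} : Finset α)) = 2 ∨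
        Nat.card (X.stab ({a, b} : Finset α)) = 4 := by omega
    rw [hf]
    rcases this with h | h <;> rw [h] <;> simp
  · have hf : X.faceOrbits.ncard = 2 := by rw [horb]; exact Set.ncard_pair hO
    have hn4 : Nat.card (X.stab ({a, b} : Finset α)) ≠ 4 := by
      intro h4
      have hb : Function.Bijective φ :=
        (Nat.bijective_iff_injective_and_card φ).2 ⟨hφ, by rw [h4]; simp⟩
      obtain ⟨⟨g, hg⟩, hgφ⟩ := hb.2 (true, false)
      simp only [φ, Prod.mk.injEq, decide_eq_false_iff_not] at hgφ
      have hg2 := (X.stab_face hF₁ heF₁ hall hg).resolve_left hgφ.2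
      apply hO
      rw [← hg2, X.orbit_eq hg.1]
    have : Nat.card (X.stab ({a, b} : Finset α)) = 1 ∨
        Nat.card (X.stab ({a, b} : Finset α)) = 2 := by omega
    rw [hf]
    rcases this with h | h <;> rw [h] <;> simp
end

section
/- Let X be an edge-transitive simplicial surface such that Aut(X) has exactly two orbits on the faces X_2. Then any two faces of X that share an edge lie in different Aut(X)-orbits; in other words, the two face orbits are the colour classes of a face-2-colouring of X. -/
open Finset

lemma SimplicialSurface.orbit_image {α : Type*} [Fintype α] [DecidableEq α]
    (X : SimplicialSurface α) (π : Equiv.Perm α) (hπ : π ∈ X.aut) (s : Finset α) :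
    X.orbit (Finset.image ⇑π s) = X.orbit s := by
  ext t
  constructor
  · rintro ⟨σ, hσ, rfl⟩
    exact ⟨σ * π, X.aut.mul_mem hσ hπ, Equiv.Perm.finset_image_mul σ π s⟩
  · rintro ⟨σ, hσ, rfl⟩
    refine ⟨σ * π⁻¹, X.aut.mul_mem hσ (X.aut.inv_mem hπ), ?_⟩
    rw [← Equiv.Perm.finset_image_mul, inv_mul_cancel_right]

/-- Let `X` be an edge-transitive simplicial surface such that `Aut(X)` has exactly two
orbits on the faces. Then any two faces of `X` sharing an edge lie in different
`Aut(X)`-orbits. -/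
theorem orbit_ne_of_share_edge
    {α : Type*} [Fintype α] [DecidableEq α] (X : SimplicialSurface α)
    (hX : X.EdgeTransitive) (h2 : X.faceOrbits.ncard = 2)
    (F G : Finset α) (hF : F ∈ X.faces) (hG : G ∈ X.faces)
    (hshare : F ∩ G ∈ X.edges) :
    X.orbit F ≠ X.orbit G := by
  intro heq
  obtain ⟨hFc, hF3⟩ := Finset.mem_filter.1 hF
  obtain ⟨hGc, hG3⟩ := Finset.mem_filter.1 hG
  obtain ⟨hec, he2⟩ := Finset.mem_filter.1 hshare
  have hFG : F ≠ G := by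
    rintro rfl
    rw [Finset.inter_self] at he2
    omega
  have hset : ({F, G} : Finset (Finset α)) =
      X.cplx.filter (fun H => F ∩ G ⊆ H ∧ H.card = 3) := by
    apply Finset.eq_of_subset_of_card_le
    · intro H hH
      rcases Finset.mem_insert.1 hH with rfl | hH
      · exact Finset.mem_filter.2 ⟨hFc, Finset.inter_subset_left, hF3⟩
      · rw [Finset.mem_singleton.1 hH]
        exact Finset.mem_filter.2 ⟨hGc, Finset.inter_subset_right, hG3⟩
    · rw [X.edge_in_two_faces _ hec he2, Finset.card_pair hFG]
  have key : ∀ H ∈ X.faces, X.orbit H = X.orbit F := by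
    intro H hH
    obtain ⟨hHc, hH3⟩ := Finset.mem_filter.1 hH
    obtain ⟨e, heH, hcard⟩ := Finset.exists_subset_card_eq (s := H) (n := 2) (by omega)
    have hee : e ∈ X.edges := Finset.mem_filter.2
      ⟨X.down_closed H hHc e (Finset.card_pos.1 (by omega)) heH, hcard⟩
    obtain ⟨π, hπ, hπe⟩ := hX e hee _ hshare
    have hm : Finset.image ⇑π H ∈ ({F, G} : Finset (Finset α)) := by
      rw [hset]
      refine Finset.mem_filter.2 ⟨(hπ H).1 hHc, ?_, ?_⟩
      · rw [← hπe]
        exact Finset.image_subset_image heH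
      · rw [Finset.card_image_of_injective _ π.injective, hH3]
    rw [← X.orbit_image π hπ H]
    rcases Finset.mem_insert.1 hm with h | h
    · rw [h]
    · rw [Finset.mem_singleton.1 h, heq]
  have hone : X.faceOrbits = {X.orbit F} := by
    ext O
    constructor
    · rintro ⟨H, hH, rfl⟩
      exact key H hH
    · rintro rfl
      exact ⟨F, hF, rfl⟩
  rw [hone, Set.ncard_singleton] at h2
  omega
end
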